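/- Let d, N ∈ ℕ, fix contracting linear similarities T_1,...,T_N of ℝ^d with Lip(T_i) < 1/2 for all i, and fix a nonempty compact set C ⊂ ℝ^d. For 𝐭 = (t_1,...,t_N) ∈ (ℝ^d)^N let F_{𝐭,∅} be the unique nonempty compact set with F_{𝐭,∅} = ⋃_{i=1}^N (T_i(F_{𝐭,∅}) + t_i) and let F_{𝐭,C} be the unique nonempty compact set with F_{𝐭,C} = ⋃_{i=1}^N (T_i(F_{𝐭,C}) + t_i) ∪ C. Then for Lebesgue-almost all 𝐭 ∈ (ℝ^d)^N (with respect to the N-fold product of d-dimensional Lebesgue measure), the upper box dimension of F_{𝐭,C} equals max{ub-dim F_{𝐭,∅}, ub-dim C}. -/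

import Mathlib

open Set Filter Topology Metric MeasureTheory

/-- Minimum number of sets of diameter at most `δ` needed to cover `F`. -/
noncomputable def coverN {X : Type*} [MetricSpace X] (F : Set X) (δ : ℝ) : ℕ :=
  sInf {n : ℕ | ∃ U : Fin n → Set X, (∀ i, EMetric.diam (U i) ≤ ENNReal.ofReal δ) ∧ F ⊆ ⋃ i, U i}

/-- Lower box dimension. -/
noncomputable def lbDim {X : Type*} [MetricSpace X] (F : Set X) : ℝ :=
  Filter.liminf (fun δ : ℝ => Real.log (coverN F δ) / (-Real.log δ)) (𝓝[>] 0)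

/-- Upper box dimension. -/
noncomputable def ubDim {X : Type*} [MetricSpace X] (F : Set X) : ℝ :=
  Filter.limsup (fun δ : ℝ => Real.log (coverN F δ) / (-Real.log δ)) (𝓝[>] 0)

lemma coverN_le_card {X : Type*} [MetricSpace X] {F : Set X} {δ : ℝ} {ι : Type*} [Fintype ι]
    (U : ι → Set X) (hU : ∀ i, ediam (U i) ≤ ENNReal.ofReal δ) (hF : F ⊆ ⋃ i, U i) :
    coverN F δ ≤ Fintype.card ι := by
  apply Nat.sInf_le
  refine ⟨fun k => U ((Fintype.equivFin ι).symm k), fun k => hU _, fun x hx => ?_⟩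
  obtain ⟨i, hi⟩ := mem_iUnion.1 (hF hx)
  exact mem_iUnion.2 ⟨Fintype.equivFin ι i, by simpa using hi⟩

lemma grid_cover {d : ℕ} (hd : 0 < d) {F : Set (EuclideanSpace ℝ (Fin d))} {R : ℝ} (hR : 0 < R)
    (hF : F ⊆ closedBall 0 R) {δ : ℝ} (hδ : 0 < δ) :
    ∃ U : (Fin d → Fin (⌊2 * R * d / δ⌋₊ + 1)) → Set (EuclideanSpace ℝ (Fin d)),
      (∀ i, ediam (U i) ≤ ENNReal.ofReal δ) ∧ F ⊆ ⋃ i, U i := by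
  have hd' : (0:ℝ) < d := by exact_mod_cast hd
  have hh : 0 < d / δ := by positivity
  refine ⟨fun k => {x | ∀ i, (k i : ℝ) ≤ (x i + R) * (d / δ) ∧ (x i + R) * (d / δ) ≤ k i + 1},
    fun k => ?_, fun x hx => ?_⟩
  · apply ediam_le_of_forall_dist_le
    intro x hx y hy
    have key : ∀ i, dist (x i) (y i) ≤ δ / d := by
      intro i
      have h1 := hx i
      have h2 := hy i
      have h3 : |(x i - y i) * (d / δ)| ≤ 1 := by
        rw [abs_le]; constructor <;> nlinarith
      rw [abs_mul, abs_of_pos hh] at h3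
      rw [Real.dist_eq, le_div_iff₀ hd']
      have := (le_div_iff₀ hh).2 h3
      rw [one_div_div] at this
      exact (le_div_iff₀ hd').1 this
    rw [EuclideanSpace.dist_eq]
    apply Real.sqrt_le_iff.2 ⟨hδ.le, ?_⟩
    calc ∑ i, dist (x i) (y i) ^ 2 ≤ ∑ i : Fin d, (δ / d) ^ 2 :=
          Finset.sum_le_sum fun i _ => pow_le_pow_left₀ dist_nonneg (key i) 2
      _ = δ ^ 2 / d := by simp; field_simp
      _ ≤ δ ^ 2 := div_le_self (by positivity) (by exact_mod_cast hd)
  · have hb : ∀ i, |x i| ≤ R := by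
      intro i
      have := hF hx
      rw [mem_closedBall_zero_iff] at this
      exact (PiLp.norm_apply_le x i).trans this
    have h0 : ∀ i, 0 ≤ (x i + R) * (d / δ) := fun i =>
      mul_nonneg (by linarith [(abs_le.1 (hb i)).1]) hh.le
    refine mem_iUnion.2 ⟨fun i => ⟨⌊(x i + R) * (d / δ)⌋₊, ?_⟩, fun i => ⟨?_, ?_⟩⟩
    · apply Nat.lt_succ_of_le
      apply Nat.floor_le_floor
      rw [mul_div_assoc]
      apply mul_le_mul_of_nonneg_right _ hh.le
      linarith [(abs_le.1 (hb i)).2]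
    · exact Nat.floor_le (h0 i)
    · exact (Nat.lt_floor_add_one _).le

lemma exists_radius {E : Type*} [NormedAddCommGroup E] {F : Set E} (hF : Bornology.IsBounded F) :
    ∃ R : ℝ, 0 < R ∧ F ⊆ closedBall 0 R := by
  obtain ⟨R, hR⟩ := hF.subset_closedBall 0
  exact ⟨max R 1, by positivity, hR.trans (closedBall_subset_closedBall (le_max_left _ _))⟩

lemma coverN_spec {d : ℕ} (hd : 0 < d) {F : Set (EuclideanSpace ℝ (Fin d))}
    (hF : Bornology.IsBounded F) {δ : ℝ} (hδ : 0 < δ) :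
    ∃ U : Fin (coverN F δ) → Set (EuclideanSpace ℝ (Fin d)),
      (∀ i, ediam (U i) ≤ ENNReal.ofReal δ) ∧ F ⊆ ⋃ i, U i := by
  obtain ⟨R, hR, hFR⟩ := exists_radius hF
  obtain ⟨U, hU, hFU⟩ := grid_cover hd hR hFR hδ
  refine Nat.sInf_mem (s := {n : ℕ | ∃ U : Fin n → Set (EuclideanSpace ℝ (Fin d)),
    (∀ i, ediam (U i) ≤ ENNReal.ofReal δ) ∧ F ⊆ ⋃ i, U i}) ⟨_, fun k => U ((Fintype.equivFin _).symm k), fun k => hU _, fun x hx => ?_⟩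
  obtain ⟨i, hi⟩ := mem_iUnion.1 (hFU hx)
  exact mem_iUnion.2 ⟨Fintype.equivFin _ i, by simpa using hi⟩

lemma coverN_mono {d : ℕ} (hd : 0 < d) {F G : Set (EuclideanSpace ℝ (Fin d))}
    (hG : Bornology.IsBounded G) (h : F ⊆ G) {δ : ℝ} (hδ : 0 < δ) : coverN F δ ≤ coverN G δ := by
  obtain ⟨U, hU, hGU⟩ := coverN_spec hd hG hδ
  simpa using coverN_le_card U hU (h.trans hGU)

lemma coverN_anti {d : ℕ} (hd : 0 < d) {F : Set (EuclideanSpace ℝ (Fin d))}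
    (hF : Bornology.IsBounded F) {δ δ' : ℝ} (hδ : 0 < δ) (h : δ ≤ δ') :
    coverN F δ' ≤ coverN F δ := by
  obtain ⟨U, hU, hGU⟩ := coverN_spec hd hF hδ
  simpa using coverN_le_card U (fun i => (hU i).trans (ENNReal.ofReal_le_ofReal h)) hGU

lemma coverN_upper {d : ℕ} (hd : 0 < d) {F : Set (EuclideanSpace ℝ (Fin d))}
    (hF : Bornology.IsBounded F) :
    ∃ K : ℝ, 0 < K ∧ ∀ δ : ℝ, 0 < δ → δ ≤ 1 → (coverN F δ : ℝ) ≤ K * δ ^ (-(d:ℝ)) := by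
  obtain ⟨R, hR, hFR⟩ := exists_radius hF
  refine ⟨(2 * R * d + 1) ^ d, by positivity, fun δ hδ hδ1 => ?_⟩
  obtain ⟨U, hU, hFU⟩ := grid_cover hd hR hFR hδ
  have h1 := coverN_le_card U hU hFU
  rw [Fintype.card_fun, Fintype.card_fin, Fintype.card_fin] at h1
  have h2 : ((⌊2 * R * d / δ⌋₊ + 1 : ℕ) : ℝ) ≤ (2 * R * d + 1) / δ := by
    push_cast
    rw [add_div]
    exact add_le_add (Nat.floor_le (by positivity)) ((one_le_div hδ).2 hδ1)
  calc (coverN F δ : ℝ) ≤ ((⌊2 * R * d / δ⌋₊ + 1 : ℕ) : ℝ) ^ d := by exact_mod_cast h1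
    _ ≤ ((2 * R * d + 1) / δ) ^ d := pow_le_pow_left₀ (by positivity) h2 d
    _ = _ := by rw [Real.rpow_neg hδ.le, Real.rpow_natCast, div_pow, div_eq_mul_inv]

lemma ev_small (ε : ℝ) (hε : 0 < ε) : ∀ᶠ δ : ℝ in 𝓝[>] 0, 0 < δ ∧ δ < ε :=
  Ioo_mem_nhdsGT hε

lemma tendsto_aux (K σ : ℝ) :
    Tendsto (fun δ : ℝ => Real.log K / (-Real.log δ) + σ) (𝓝[>] 0) (𝓝 σ) := by
  have h : Tendsto (fun δ : ℝ => -Real.log δ) (𝓝[>] 0) atTop :=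
    tendsto_neg_atBot_atTop.comp Real.tendsto_log_nhdsGT_zero
  simpa using (h.const_div_atTop (Real.log K)).add_const σ

lemma ratio_le {K σ : ℝ} (hK : 0 < K) {n : ℕ} {δ : ℝ} (hδ : 0 < δ) (hδ1 : δ < 1)
    (h : (n : ℝ) ≤ K * δ ^ (-σ)) (hn : n ≠ 0) :
    Real.log n / (-Real.log δ) ≤ Real.log K / (-Real.log δ) + σ := by
  have hl : 0 < -Real.log δ := by linarith [Real.log_neg hδ hδ1]
  have h1 : Real.log n ≤ Real.log K + σ * (-Real.log δ) := by
    have := Real.log_le_log (by positivity) h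
    rw [Real.log_mul hK.ne' (Real.rpow_pos_of_pos hδ _).ne', Real.log_rpow hδ] at this
    linarith
  calc _ ≤ (Real.log K + σ * (-Real.log δ)) / (-Real.log δ) := by gcongr
    _ = _ := by rw [add_div, mul_div_cancel_right₀ _ hl.ne']

lemma coverN_ne_zero {d : ℕ} (hd : 0 < d) {F : Set (EuclideanSpace ℝ (Fin d))}
    (hF : Bornology.IsBounded F) (hne : F.Nonempty) {δ : ℝ} (hδ : 0 < δ) : coverN F δ ≠ 0 := by
  intro h0
  obtain ⟨U, hU, hFU⟩ := coverN_spec hd hF hδ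
  obtain ⟨x, hx⟩ := hne
  obtain ⟨i, hi⟩ := mem_iUnion.1 (hFU hx)
  exact (h0 ▸ i).elim0

lemma bdd_below_ratio {X : Type*} [MetricSpace X] (F : Set X) :
    IsCoboundedUnder (· ≤ ·) (𝓝[>] (0:ℝ))
      (fun δ : ℝ => Real.log (coverN F δ) / (-Real.log δ)) := by
  apply IsBoundedUnder.isCoboundedUnder_le
  refine ⟨0, ?_⟩
  rw [eventually_map]
  filter_upwards [ev_small 1 one_pos] with δ hδ
  exact div_nonneg (Real.log_natCast_nonneg _) (by linarith [Real.log_neg hδ.1 hδ.2])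

lemma bdd_above_ratio {d : ℕ} (hd : 0 < d) {F : Set (EuclideanSpace ℝ (Fin d))}
    (hF : Bornology.IsBounded F) (hne : F.Nonempty) :
    IsBoundedUnder (· ≤ ·) (𝓝[>] (0:ℝ))
      (fun δ : ℝ => Real.log (coverN F δ) / (-Real.log δ)) := by
  obtain ⟨K, hK, h⟩ := coverN_upper hd hF
  refine (tendsto_aux K d).isBoundedUnder_le.mono_le ?_
  filter_upwards [ev_small 1 one_pos] with δ hδ
  exact ratio_le hK hδ.1 hδ.2 (h δ hδ.1 hδ.2.le) (coverN_ne_zero hd hF hne hδ.1)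

lemma ubDim_le {d : ℕ} (hd : 0 < d) {F : Set (EuclideanSpace ℝ (Fin d))}
    (hF : Bornology.IsBounded F) (hne : F.Nonempty) {K σ : ℝ} (hK : 0 < K)
    (h : ∀ᶠ δ in 𝓝[>] (0:ℝ), (coverN F δ : ℝ) ≤ K * δ ^ (-σ)) : ubDim F ≤ σ := by
  rw [← (tendsto_aux K σ).limsup_eq]
  refine limsup_le_limsup ?_ (bdd_below_ratio F) (tendsto_aux K σ).isBoundedUnder_le
  filter_upwards [h, ev_small 1 one_pos] with δ h1 hδ
  exact ratio_le hK hδ.1 hδ.2 h1 (coverN_ne_zero hd hF hne hδ.1)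

lemma ubDim_mono {d : ℕ} (hd : 0 < d) {F G : Set (EuclideanSpace ℝ (Fin d))}
    (hG : Bornology.IsBounded G) (hne : F.Nonempty) (h : F ⊆ G) : ubDim F ≤ ubDim G := by
  refine limsup_le_limsup ?_ (bdd_below_ratio F) (bdd_above_ratio hd hG (hne.mono h))
  filter_upwards [ev_small 1 one_pos] with δ hδ
  have h1 := coverN_mono hd hG h hδ.1
  have h0 := coverN_ne_zero hd (hG.subset h) hne hδ.1
  have hl : 0 < -Real.log δ := by linarith [Real.log_neg hδ.1 hδ.2]
  have : (0:ℝ) < coverN F δ := by positivity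
  gcongr

lemma coverN_of_ubDim_lt {d : ℕ} (hd : 0 < d) {F : Set (EuclideanSpace ℝ (Fin d))}
    (hF : Bornology.IsBounded F) (hne : F.Nonempty) {σ : ℝ} (h : ubDim F < σ) :
    ∀ᶠ δ in 𝓝[>] (0:ℝ), (coverN F δ : ℝ) ≤ δ ^ (-σ) := by
  have := eventually_lt_of_limsup_lt h (bdd_above_ratio hd hF hne)
  filter_upwards [this, ev_small 1 one_pos] with δ h1 hδ
  have h0 := coverN_ne_zero hd hF hne hδ.1
  have hl : 0 < -Real.log δ := by linarith [Real.log_neg hδ.1 hδ.2]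
  rw [div_lt_iff₀ hl] at h1
  rw [← Real.log_le_log_iff (by positivity) (Real.rpow_pos_of_pos hδ.1 _), Real.log_rpow hδ.1]
  linarith

/-- Upper bound recursion. -/
lemma coverN_rec {d N : ℕ} (hd : 0 < d)
    {f : Fin N → EuclideanSpace ℝ (Fin d) → EuclideanSpace ℝ (Fin d)}
    {r : Fin N → ℝ} (hr : ∀ i, 0 < r i)
    (hf : ∀ i x y, dist (f i x) (f i y) = r i * dist x y)
    {C FC : Set (EuclideanSpace ℝ (Fin d))} (hC : Bornology.IsBounded C)
    (hFC : Bornology.IsBounded FC) (h : FC = (⋃ i, f i '' FC) ∪ C) {δ : ℝ} (hδ : 0 < δ) :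
    coverN FC δ ≤ ∑ i, coverN FC (δ / r i) + coverN C δ := by
  choose U hU hFU using fun i => coverN_spec hd hFC (div_pos hδ (hr i))
  obtain ⟨V, hV, hCV⟩ := coverN_spec hd hC hδ
  have := coverN_le_card (F := FC) (δ := δ)
    (ι := (Σ i : Fin N, Fin (coverN FC (δ / r i))) ⊕ Fin (coverN C δ))
    (Sum.elim (fun p => f p.1 '' U p.1 p.2) V) ?_ ?_
  · simpa using this
  · rintro (⟨i, k⟩ | k)
    · have hL : LipschitzWith (r i).toNNReal (f i) :=
        LipschitzWith.of_dist_le_mul fun x y => by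
          rw [Real.coe_toNNReal _ (hr i).le]; exact (hf i x y).le
      refine (hL.ediam_image_le _).trans ((mul_le_mul_right (hU i k) _).trans ?_)
      change ENNReal.ofReal (r i) * _ ≤ _
      rw [← ENNReal.ofReal_mul (hr i).le, mul_div_cancel₀ _ (hr i).ne']
    · exact hV k
  · intro x hx
    rw [h] at hx
    rcases hx with hx | hx
    · obtain ⟨i, y, hy, rfl⟩ := mem_iUnion.1 hx
      obtain ⟨k, hk⟩ := mem_iUnion.1 (hFU i hy)
      exact mem_iUnion.2 ⟨Sum.inl ⟨i, k⟩, mem_image_of_mem _ hk⟩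
    · obtain ⟨k, hk⟩ := mem_iUnion.1 (hCV hx)
      exact mem_iUnion.2 ⟨Sum.inr k, hk⟩

lemma ubDim_FC_le {d N : ℕ} (hd : 0 < d)
    {f : Fin N → EuclideanSpace ℝ (Fin d) → EuclideanSpace ℝ (Fin d)}
    {r : Fin N → ℝ} (hr : ∀ i, 0 < r i) (hr2 : ∀ i, r i < 1 / 2)
    (hf : ∀ i x y, dist (f i x) (f i y) = r i * dist x y)
    {C FC : Set (EuclideanSpace ℝ (Fin d))} (hC : Bornology.IsBounded C) (hCne : C.Nonempty)
    (hFC : Bornology.IsBounded FC) (h : FC = (⋃ i, f i '' FC) ∪ C) {σ : ℝ} (hσ0 : 0 ≤ σ)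
    (hσ : ∑ i, r i ^ σ < 1) (hσC : ubDim C < σ) : ubDim FC ≤ σ := by
  have hFCne : FC.Nonempty := by rw [h]; exact hCne.mono subset_union_right
  obtain ⟨ε, hε, hεC⟩ := (mem_nhdsGT_iff_exists_Ioo_subset).1 (coverN_of_ubDim_lt hd hC hCne hσC)
  have hε : 0 < ε := hε
  set ρ := ∑ i, r i ^ σ with hρ
  obtain ⟨r0, hr0, hr0i⟩ : ∃ r0 : ℝ, 0 < r0 ∧ ∀ i, r0 ≤ r i := by
    rcases Nat.eq_zero_or_pos N with rfl | hN
    · exact ⟨1, one_pos, fun i => i.elim0⟩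
    · have : Nonempty (Fin N) := ⟨⟨0, hN⟩⟩
      obtain ⟨i, hi⟩ := Finite.exists_min r
      exact ⟨r i, hr i, hi⟩
  -- big scales
  set M := max (1 / (1 - ρ)) ((coverN FC (ε / 2) : ℝ) * (ε / r0) ^ σ) with hM
  have h1ρ : 0 < 1 - ρ := by linarith
  have hM0 : 0 < M := lt_of_lt_of_le (by positivity) (le_max_left _ _)
  have key : ∀ n : ℕ, ∀ δ : ℝ, ε / 2 ^ (n + 1) ≤ δ → δ ≤ ε / r0 →
      (coverN FC δ : ℝ) ≤ M * δ ^ (-σ) := by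
    intro n
    induction n with
    | zero =>
      intro δ h1 h2
      simp only [zero_add, pow_one] at h1
      have hδ : 0 < δ := lt_of_lt_of_le (by positivity) h1
      have h3 : (coverN FC δ : ℝ) ≤ coverN FC (ε / 2) := by
        exact_mod_cast coverN_anti hd hFC (by positivity) h1
      rw [Real.rpow_neg hδ.le, ← div_eq_mul_inv, le_div_iff₀ (Real.rpow_pos_of_pos hδ _)]
      refine le_trans ?_ (le_max_right _ _)
      gcongr
    | succ n ih =>
      intro δ h1 h2
      have hδ : 0 < δ := lt_of_lt_of_le (by positivity) h1
      rcases le_or_gt (ε / 2 ^ (n + 1)) δ with h3 | h3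
      · exact ih δ h3 h2
      have hδε : δ < ε := h3.trans_le (div_le_self hε.le (one_le_pow₀ (by norm_num)))
      have hrec : (coverN FC δ : ℝ) ≤ ∑ i, (coverN FC (δ / r i) : ℝ) + coverN C δ := by
        exact_mod_cast coverN_rec hd hr hf hC hFC h hδ
      have hCδ : (coverN C δ : ℝ) ≤ δ ^ (-σ) := hεC ⟨hδ, hδε⟩
      have hi : ∀ i, (coverN FC (δ / r i) : ℝ) ≤ M * (r i ^ σ * δ ^ (-σ)) := by
        intro i
        have := ih (δ / r i) ?_ ?_
        · refine this.trans_eq ?_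
          rw [Real.div_rpow hδ.le (hr i).le, Real.rpow_neg (hr i).le, div_inv_eq_mul]
          ring
        · rw [le_div_iff₀ (hr i)]
          refine le_trans ?_ h1
          calc ε / 2 ^ (n + 1) * r i ≤ ε / 2 ^ (n + 1) * (1 / 2) := by
                gcongr; exact (hr2 i).le
            _ = ε / 2 ^ (n + 1 + 1) := by rw [pow_succ 2 (n + 1)]; field_simp
        · exact div_le_div₀ hε.le hδε.le hr0 (hr0i i)
      have hs : ∑ i, (coverN FC (δ / r i) : ℝ) ≤ M * ρ * δ ^ (-σ) := by
        refine (Finset.sum_le_sum fun i _ => hi i).trans_eq ?_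
        rw [← Finset.mul_sum, ← Finset.sum_mul, mul_assoc]
      have hMM : M * ρ + 1 ≤ M := by
        have : 1 ≤ M * (1 - ρ) := (div_le_iff₀ h1ρ).1 (le_max_left _ _)
        linarith
      have := mul_le_mul_of_nonneg_right hMM (Real.rpow_pos_of_pos hδ (-σ)).le
      linarith
  apply ubDim_le hd hFC hFCne hM0
  filter_upwards [ev_small (min ε (ε / r0)) (by positivity)] with δ hδ
  obtain ⟨n, hn⟩ := exists_pow_lt_of_lt_one (div_pos hδ.1 hε) (by norm_num : (1/2:ℝ) < 1)
  refine key n δ ?_ (hδ.2.le.trans (min_le_right _ _))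
  rw [lt_div_iff₀ hε] at hn
  refine le_trans ?_ hn.le
  rw [one_div, inv_pow, pow_succ, div_eq_inv_mul]
  gcongr
  exact le_mul_of_one_le_right (by positivity) (by norm_num)

section Words

variable {d N : ℕ}

/-- The point `f_u(y)` for the word `u`. -/
def wpt (T : Fin N → EuclideanSpace ℝ (Fin d) →ₗ[ℝ] EuclideanSpace ℝ (Fin d))
    (y : EuclideanSpace ℝ (Fin d)) (t : Fin N → EuclideanSpace ℝ (Fin d)) :
    (m : ℕ) → (Fin m → Fin N) → EuclideanSpace ℝ (Fin d)
  | 0, _ => y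
  | m + 1, u => T (u 0) (wpt T y t m (Fin.tail u)) + t (u 0)

/-- Lipschitz constants of `wpt` in the `i`-th coordinate of the parameter. -/
noncomputable def wlip (r : Fin N → ℝ) (i : Fin N) : (m : ℕ) → (Fin m → Fin N) → ℝ
  | 0, _ => 0
  | m + 1, u => r (u 0) * wlip r i m (Fin.tail u) + if u 0 = i then 1 else 0

lemma wlip_nonneg {r : Fin N → ℝ} (hr : ∀ i, 0 < r i) (i : Fin N) (m : ℕ) (u : Fin m → Fin N) :
    0 ≤ wlip r i m u := by
  induction m with
  | zero => simp [wlip]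
  | succ m ih =>
    rw [wlip]
    exact add_nonneg (mul_nonneg (hr _).le (ih _)) (by split_ifs <;> norm_num)

lemma wlip_add_le {r : Fin N → ℝ} (hr : ∀ i, 0 < r i) {q : ℝ} (hq : ∀ i, r i ≤ q) (hq1 : q < 1)
    {i j : Fin N} (hij : i ≠ j) (m : ℕ) (u : Fin m → Fin N) :
    wlip r i m u + wlip r j m u ≤ 1 / (1 - q) := by
  have h1 : 0 < 1 - q := by linarith
  induction m with
  | zero => simp [wlip]; linarith
  | succ m ih =>
    have h2 := ih (Fin.tail u)
    have hn := add_nonneg (wlip_nonneg hr i m (Fin.tail u)) (wlip_nonneg hr j m (Fin.tail u))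
    have h3 : (if u 0 = i then (1:ℝ) else 0) + (if u 0 = j then 1 else 0) ≤ 1 := by
      split_ifs with ha hb
      · exact absurd (ha.symm.trans hb) hij
      all_goals norm_num
    have h4 : r (u 0) * (wlip r i m (Fin.tail u) + wlip r j m (Fin.tail u)) ≤ q * (1 / (1 - q)) :=
      mul_le_mul (hq _) h2 hn ((hr (u 0)).le.trans (hq _))
    have h5 : q * (1 / (1 - q)) + 1 = 1 / (1 - q) := by field_simp; ring
    rw [wlip, wlip]
    linarith

lemma norm_T {T : Fin N → EuclideanSpace ℝ (Fin d) →ₗ[ℝ] EuclideanSpace ℝ (Fin d)}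
    {r : Fin N → ℝ} (hT : ∀ i x y, dist (T i x) (T i y) = r i * dist x y) (i : Fin N)
    (x : EuclideanSpace ℝ (Fin d)) : ‖T i x‖ = r i * ‖x‖ := by
  simpa using hT i x 0

lemma wpt_lip {T : Fin N → EuclideanSpace ℝ (Fin d) →ₗ[ℝ] EuclideanSpace ℝ (Fin d)}
    {r : Fin N → ℝ} (hr : ∀ i, 0 < r i) (hT : ∀ i x y, dist (T i x) (T i y) = r i * dist x y)
    (y : EuclideanSpace ℝ (Fin d)) (t : Fin N → EuclideanSpace ℝ (Fin d)) (i : Fin N)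
    (a b : EuclideanSpace ℝ (Fin d)) (m : ℕ) (u : Fin m → Fin N) :
    ‖wpt T y (Function.update t i a) m u - wpt T y (Function.update t i b) m u‖
      ≤ wlip r i m u * ‖a - b‖ := by
  induction m with
  | zero => simp [wpt, wlip]
  | succ m ih =>
    rw [wpt, wpt, wlip]
    set X := wpt T y (Function.update t i a) m (Fin.tail u)
    set Y := wpt T y (Function.update t i b) m (Fin.tail u)
    have e : T (u 0) X + Function.update t i a (u 0) - (T (u 0) Y + Function.update t i b (u 0))
        = T (u 0) (X - Y) + (if u 0 = i then a - b else 0) := by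
      rw [map_sub]
      split_ifs with h
      · rw [h]; simp; abel
      · simp [Function.update_of_ne h]
    rw [e]
    refine (norm_add_le _ _).trans ?_
    rw [norm_T hT, add_mul, mul_assoc]
    apply add_le_add
    · exact mul_le_mul_of_nonneg_left (ih _) (hr _).le
    · split_ifs <;> simp

lemma wpt_continuous {T : Fin N → EuclideanSpace ℝ (Fin d) →ₗ[ℝ] EuclideanSpace ℝ (Fin d)}
    (y : EuclideanSpace ℝ (Fin d)) (m : ℕ) (u : Fin m → Fin N) :
    Continuous fun t => wpt T y t m u := by
  induction m with
  | zero => exact continuous_const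
  | succ m ih =>
    exact ((T (u 0)).continuous_of_finiteDimensional.comp (ih _)).add (continuous_apply _)

lemma wpt_dist {T : Fin N → EuclideanSpace ℝ (Fin d) →ₗ[ℝ] EuclideanSpace ℝ (Fin d)}
    {r : Fin N → ℝ} (hr : ∀ i, 0 < r i) (hr2 : ∀ i, r i < 1 / 2)
    (hT : ∀ i x y, dist (T i x) (T i y) = r i * dist x y)
    (x y : EuclideanSpace ℝ (Fin d)) (t : Fin N → EuclideanSpace ℝ (Fin d)) (m : ℕ)
    (u : Fin m → Fin N) :
    dist (wpt T x t m u) (wpt T y t m u) ≤ (1 / 2) ^ m * dist x y := by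
  induction m with
  | zero => simp [wpt]
  | succ m ih =>
    rw [wpt, wpt, dist_add_right, hT, pow_succ', mul_assoc]
    exact mul_le_mul (hr2 _).le (ih _) dist_nonneg (by norm_num)

lemma wpt_mem {T : Fin N → EuclideanSpace ℝ (Fin d) →ₗ[ℝ] EuclideanSpace ℝ (Fin d)}
    {F : Set (EuclideanSpace ℝ (Fin d))} {t : Fin N → EuclideanSpace ℝ (Fin d)}
    (hF : ∀ i, ∀ x ∈ F, T i x + t i ∈ F) {y : EuclideanSpace ℝ (Fin d)} (hy : y ∈ F) (m : ℕ)
    (u : Fin m → Fin N) : wpt T y t m u ∈ F := by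
  induction m with
  | zero => exact hy
  | succ m ih => exact hF _ _ (ih _)

/-- Every point of the attractor is coded at each level. -/
lemma exists_wpt {T : Fin N → EuclideanSpace ℝ (Fin d) →ₗ[ℝ] EuclideanSpace ℝ (Fin d)}
    {F : Set (EuclideanSpace ℝ (Fin d))} {t : Fin N → EuclideanSpace ℝ (Fin d)}
    (hF : F = ⋃ i, (fun x => T i x + t i) '' F) (m : ℕ) :
    ∀ x ∈ F, ∃ u : Fin m → Fin N, ∃ y ∈ F, wpt T y t m u = x := by
  induction m with
  | zero => exact fun x hx => ⟨Fin.elim0, x, hx, rfl⟩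
  | succ m ih =>
    intro x hx
    rw [hF] at hx
    obtain ⟨i, z, hz, rfl⟩ := mem_iUnion.1 hx
    obtain ⟨u, y, hy, rfl⟩ := ih z hz
    exact ⟨Fin.cons i u, y, hy, by simp [wpt]⟩

lemma attractor_subset {T : Fin N → EuclideanSpace ℝ (Fin d) →ₗ[ℝ] EuclideanSpace ℝ (Fin d)}
    {r : Fin N → ℝ} (hr : ∀ i, 0 < r i) (hr2 : ∀ i, r i < 1 / 2)
    (hT : ∀ i x y, dist (T i x) (T i y) = r i * dist x y)
    {F G : Set (EuclideanSpace ℝ (Fin d))} {t : Fin N → EuclideanSpace ℝ (Fin d)}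
    (hFb : Bornology.IsBounded F) (hF : F = ⋃ i, (fun x => T i x + t i) '' F)
    (hGc : IsClosed G) (hGne : G.Nonempty) (hG : ∀ i, ∀ x ∈ G, T i x + t i ∈ G) : F ⊆ G := by
  intro x hx
  obtain ⟨z, hz⟩ := hGne
  obtain ⟨D, hD⟩ := hFb.subset_closedBall z
  rw [← hGc.closure_eq, Metric.mem_closure_iff]
  intro ε hε
  have hD1 : 0 < |D| + 1 := by positivity
  obtain ⟨m, hm⟩ := exists_pow_lt_of_lt_one (div_pos hε hD1) (by norm_num : (1/2:ℝ) < 1)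
  obtain ⟨u, y, hy, rfl⟩ := exists_wpt hF m x hx
  refine ⟨wpt T z t m u, wpt_mem hG hz m u, (wpt_dist hr hr2 hT y z t m u).trans_lt ?_⟩
  rw [lt_div_iff₀ hD1] at hm
  refine lt_of_le_of_lt ?_ hm
  gcongr
  have := hD hy
  rw [mem_closedBall] at this
  linarith [le_abs_self D]

/-- Transversality. -/
lemma transversal {T : Fin N → EuclideanSpace ℝ (Fin d) →ₗ[ℝ] EuclideanSpace ℝ (Fin d)}
    {r : Fin N → ℝ} (hr : ∀ i, 0 < r i) {q : ℝ} (hq : ∀ i, r i ≤ q) (hq2 : q < 1 / 2)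
    (hT : ∀ i x y, dist (T i x) (T i y) = r i * dist x y)
    (y : EuclideanSpace ℝ (Fin d)) (m : ℕ) (u v : Fin m → Fin N) {i j : Fin N} (hij : i ≠ j) :
    ∃ k : Fin N, ∀ t a b, (1 - q / (1 - q)) * ‖a - b‖ ≤
      ‖(T i (wpt T y (Function.update t k a) m u) + Function.update t k a i
        - (T j (wpt T y (Function.update t k a) m v) + Function.update t k a j))
        - (T i (wpt T y (Function.update t k b) m u) + Function.update t k b i
        - (T j (wpt T y (Function.update t k b) m v) + Function.update t k b j))‖ := by
  have h1 : 0 < 1 - q := by linarith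
  have hu := wlip_add_le hr hq (by linarith) hij m u
  have hv := wlip_add_le hr hq (by linarith) hij m v
  have hnu := add_nonneg (wlip_nonneg hr i m u) (wlip_nonneg hr j m u)
  have hnv := add_nonneg (wlip_nonneg hr i m v) (wlip_nonneg hr j m v)
  have hq0 : 0 ≤ q := (hr i).le.trans (hq i)
  have hA : r i * (wlip r i m u + wlip r j m u) ≤ q * (1 / (1 - q)) := mul_le_mul (hq _) hu hnu hq0
  have hB : r j * (wlip r i m v + wlip r j m v) ≤ q * (1 / (1 - q)) := mul_le_mul (hq _) hv hnv hq0
  have hor : r i * wlip r i m u + r j * wlip r i m v ≤ q / (1 - q) ∨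
      r i * wlip r j m u + r j * wlip r j m v ≤ q / (1 - q) := by
    rw [mul_one_div] at hA hB
    by_contra! hcon
    linarith [hcon.1, hcon.2]
  have gen : ∀ k, r i * wlip r k m u + r j * wlip r k m v ≤ q / (1 - q) → ∀ t a b,
      ‖T i (wpt T y (Function.update t k a) m u - wpt T y (Function.update t k b) m u)
      - T j (wpt T y (Function.update t k a) m v - wpt T y (Function.update t k b) m v)‖
      ≤ q / (1 - q) * ‖a - b‖ := by
    intro k hk t a b
    refine (norm_sub_le _ _).trans ?_
    rw [norm_T hT, norm_T hT]
    have e1 := mul_le_mul_of_nonneg_left (wpt_lip hr hT y t k a b m u) (hr i).le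
    have e2 := mul_le_mul_of_nonneg_left (wpt_lip hr hT y t k a b m v) (hr j).le
    have e3 := mul_le_mul_of_nonneg_right hk (norm_nonneg (a - b))
    linarith
  rcases hor with h | h
  · refine ⟨i, fun t a b => ?_⟩
    have g := gen i h t a b
    rw [map_sub, map_sub] at g
    simp only [Function.update_self, Function.update_of_ne hij.symm]
    set P := T i (wpt T y (Function.update t i a) m u)
    set P' := T i (wpt T y (Function.update t i b) m u)
    set Q := T j (wpt T y (Function.update t i a) m v)
    set Q' := T j (wpt T y (Function.update t i b) m v)
    have e : P + a - (Q + t j) - (P' + b - (Q' + t j)) = (a - b) - -(P - P' - (Q - Q')) := by abel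
    rw [e]
    have := norm_sub_norm_le (a - b) (-(P - P' - (Q - Q')))
    rw [norm_neg] at this
    linarith
  · refine ⟨j, fun t a b => ?_⟩
    have g := gen j h t a b
    rw [map_sub, map_sub] at g
    simp only [Function.update_self, Function.update_of_ne hij]
    set P := T i (wpt T y (Function.update t j a) m u)
    set P' := T i (wpt T y (Function.update t j b) m u)
    set Q := T j (wpt T y (Function.update t j a) m v)
    set Q' := T j (wpt T y (Function.update t j b) m v)
    have e : P + t i - (Q + a) - (P' + t i - (Q' + b)) = (P - P' - (Q - Q')) - (a - b) := by abel
    rw [e, norm_sub_rev (P - P' - (Q - Q'))]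
    have := norm_sub_norm_le (a - b) (P - P' - (Q - Q'))
    linarith

end Words

lemma slice_measure {d N : ℕ} {R : ℝ} (hR : 0 ≤ R) {c : ℝ} (hc : 0 < c) :
    ∃ K : ℝ, 0 ≤ K ∧ ∀ g : (Fin N → EuclideanSpace ℝ (Fin d)) → EuclideanSpace ℝ (Fin d),
      Continuous g → ∀ k : Fin N, (∀ t a b, c * ‖a - b‖ ≤
        ‖g (Function.update t k a) - g (Function.update t k b)‖) → ∀ η : ℝ, 0 ≤ η →
      (volume.restrict (closedBall 0 R)).real {t | ‖g t‖ ≤ η} ≤ K * η ^ d := by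
  set ν : Measure (EuclideanSpace ℝ (Fin d)) := volume.restrict (closedBall 0 R) with hν
  have : IsFiniteMeasure ν := ⟨by
    rw [hν, Measure.restrict_apply_univ]; exact (isCompact_closedBall _ _).measure_lt_top⟩
  have hμ : (volume : Measure (Fin N → EuclideanSpace ℝ (Fin d))).restrict (closedBall 0 R)
      = Measure.pi fun _ => ν := by
    rw [closedBall_pi _ hR, volume_pi, Measure.restrict_pi_pi]; rfl
  set B := (volume (ball (0 : EuclideanSpace ℝ (Fin d)) 1)) with hB
  have hBf : B ≠ ⊤ := measure_ball_lt_top.ne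
  refine ⟨(2 / c) ^ d * B.toReal * (ν univ).toReal ^ (N - 1), by positivity,
    fun g hg k hk η hη => ?_⟩
  rw [hμ]
  have hS : MeasurableSet {t | ‖g t‖ ≤ η} := (isClosed_le hg.norm continuous_const).measurableSet
  have hin : ∀ t, ∫⁻ a, ({t | ‖g t‖ ≤ η}.indicator 1 (Function.update t k a) : ENNReal) ∂ν
      ≤ ENNReal.ofReal ((2 * η / c) ^ d) * B := by
    intro t
    have hSa : MeasurableSet {a | ‖g (Function.update t k a)‖ ≤ η} :=
      (isClosed_le (hg.comp (continuous_const.update k continuous_id)).norm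
        continuous_const).measurableSet
    have e : (fun a => ({t | ‖g t‖ ≤ η}.indicator 1 (Function.update t k a) : ENNReal))
      = {a | ‖g (Function.update t k a)‖ ≤ η}.indicator 1 := rfl
    rw [e, lintegral_indicator_one hSa]
    refine (Measure.restrict_apply_le _ _).trans ?_
    rcases Set.eq_empty_or_nonempty {a | ‖g (Function.update t k a)‖ ≤ η} with h0 | ⟨b, hb⟩
    · rw [h0]; simp
    · have hsub : {a | ‖g (Function.update t k a)‖ ≤ η} ⊆ closedBall b (2 * η / c) := by
        intro a ha
        rw [mem_closedBall, dist_eq_norm, le_div_iff₀ hc]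
        have h1 := hk t a b
        have h2 := norm_sub_le (g (Function.update t k a)) (g (Function.update t k b))
        have ha' : ‖g (Function.update t k a)‖ ≤ η := ha
        have hb' : ‖g (Function.update t k b)‖ ≤ η := hb
        linarith
      refine (measure_mono hsub).trans ?_
      rw [Measure.addHaar_closedBall _ _ (by positivity)]
      simp [hB]
  have main : (Measure.pi fun _ => ν) {t | ‖g t‖ ≤ η}
      ≤ ENNReal.ofReal ((2 * η / c) ^ d) * B * (ν univ) ^ (N - 1) := by
    rw [← lintegral_indicator_one hS, lintegral_eq_lmarginal_univ 0,
      lmarginal_erase' _ (measurable_one.indicator hS) (Finset.mem_univ k)]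
    refine (lmarginal_mono (g := fun _ => ENNReal.ofReal ((2 * η / c) ^ d) * B) hin 0).trans ?_
    rw [lmarginal, lintegral_const, Measure.pi_univ]
    simp
  have hfin : ENNReal.ofReal ((2 * η / c) ^ d) * B * (ν univ) ^ (N - 1) ≠ ⊤ :=
    ENNReal.mul_ne_top (ENNReal.mul_ne_top ENNReal.ofReal_ne_top hBf)
      (ENNReal.pow_ne_top (measure_ne_top _ _))
  have := ENNReal.toReal_mono hfin main
  rw [ENNReal.toReal_mul, ENNReal.toReal_mul, ENNReal.toReal_ofReal (by positivity),
    ENNReal.toReal_pow] at this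
  refine this.trans_eq ?_
  rw [mul_div_right_comm, mul_pow]; ring

section Energy

variable {d N : ℕ}

lemma sum_cons_word {m : ℕ} (f : (Fin (m + 1) → Fin N) → ℝ) :
    ∑ u, f u = ∑ i, ∑ u : Fin m → Fin N, f (Fin.cons i u) := by
  rw [← (Fin.consEquiv (fun _ => Fin N)).sum_comp, Fintype.sum_prod_type]
  rfl

lemma sum_word_weight {p : Fin N → ℝ} (hp : ∑ i, p i = 1) (m : ℕ) :
    ∑ u : Fin m → Fin N, ∏ k, p (u k) = 1 := by
  rw [← Fintype.prod_sum]  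
  simp [hp]

lemma energy_bound {T : Fin N → EuclideanSpace ℝ (Fin d) →ₗ[ℝ] EuclideanSpace ℝ (Fin d)}
    {r : Fin N → ℝ} (hr : ∀ i, 0 < r i) {q : ℝ} (hq : ∀ i, r i ≤ q) (hq2 : q < 1 / 2)
    (hT : ∀ i x y, dist (T i x) (T i y) = r i * dist x y)
    {p : Fin N → ℝ} (hp0 : ∀ i, 0 ≤ p i) (hp : ∑ i, p i = 1) {σ : ℝ} (hσ0 : 0 < σ) (hσd : σ ≤ d)
    (hρ : ∑ i, p i * p i * r i ^ (-σ) < 1) {R : ℝ} (hR : 0 ≤ R) :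
    ∃ M : ℝ, 0 ≤ M ∧ ∀ (m : ℕ) (η : ℝ), (1 / 2) ^ m ≤ η →
      ∑ u : Fin m → Fin N, ∑ v : Fin m → Fin N, (∏ k, p (u k)) * (∏ k, p (v k)) *
        (volume.restrict (closedBall 0 R)).real {t | ‖wpt T 0 t m u - wpt T 0 t m v‖ ≤ η}
      ≤ M * η ^ σ := by
  have h1q : 0 < 1 - q := by linarith
  have hc : 0 < 1 - q / (1 - q) := by
    rw [sub_pos, div_lt_one h1q]; linarith
  obtain ⟨K, hK, hslice⟩ := slice_measure (d := d) (N := N) hR hc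
  set μ : Measure (Fin N → EuclideanSpace ℝ (Fin d)) := volume.restrict (closedBall 0 R) with hμ
  have : IsFiniteMeasure μ := ⟨by
    rw [hμ, Measure.restrict_apply_univ]; exact (isCompact_closedBall _ _).measure_lt_top⟩
  set V := μ.real univ with hV
  have hV0 : 0 ≤ V := measureReal_nonneg
  set c := max V K with hcdef
  have hc0 : 0 ≤ c := hV0.trans (le_max_left _ _)
  set ρ := ∑ i, p i * p i * r i ^ (-σ) with hρdef
  have h1ρ : 0 < 1 - ρ := by linarith
  set M := max V (c / (1 - ρ)) with hM
  have hM0 : 0 ≤ M := hV0.trans (le_max_left _ _)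
  have hP0 : ∀ (m : ℕ) (u : Fin m → Fin N), 0 ≤ ∏ k, p (u k) :=
    fun m u => Finset.prod_nonneg fun k _ => hp0 _
  -- transversality measure bound
  have htr : ∀ (m : ℕ) (i j : Fin N) (u v : Fin m → Fin N), i ≠ j → ∀ η : ℝ, 0 < η →
      μ.real {t | ‖wpt T 0 t (m + 1) (Fin.cons i u) - wpt T 0 t (m + 1) (Fin.cons j v)‖ ≤ η}
        ≤ c * η ^ σ := by
    intro m i j u v hij η hη
    rcases le_total η 1 with h | h
    · obtain ⟨k, hk⟩ := transversal hr hq hq2 hT 0 m u v hij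
      have := hslice (fun t => wpt T 0 t (m + 1) (Fin.cons i u) - wpt T 0 t (m + 1) (Fin.cons j v))
        ((wpt_continuous _ _ _).sub (wpt_continuous _ _ _)) k
        (fun t a b => by simpa [wpt] using hk t a b) η hη.le
      refine this.trans (mul_le_mul (le_max_right _ _) ?_ (by positivity) hc0)
      rw [← Real.rpow_natCast]
      exact Real.rpow_le_rpow_of_exponent_ge hη h hσd
    · refine (measureReal_mono (subset_univ _)).trans ((le_max_left V K).trans ?_)
      exact le_mul_of_one_le_right hc0 (Real.one_le_rpow h hσ0.le)
  have hsame : ∀ (m : ℕ) (i : Fin N) (u v : Fin m → Fin N) (η : ℝ),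
      {t | ‖wpt T 0 t (m + 1) (Fin.cons i u) - wpt T 0 t (m + 1) (Fin.cons i v)‖ ≤ η}
        = {t | ‖wpt T 0 t m u - wpt T 0 t m v‖ ≤ η / r i} := by
    intro m i u v η
    ext t
    simp only [mem_setOf_eq, wpt, Fin.cons_zero, Fin.tail_cons, add_sub_add_right_eq_sub]
    rw [← map_sub, norm_T hT, le_div_iff₀ (hr i), mul_comm]
  refine ⟨M, hM0, fun m => ?_⟩
  induction m with
  | zero =>
    intro η hη
    simp only [pow_zero] at hη
    have : (0:ℝ) ≤ η := zero_le_one.trans hη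
    simp [wpt, this]
    exact (le_max_left V _).trans (le_mul_of_one_le_right hM0 (Real.one_le_rpow hη hσ0.le))
  | succ m ih =>
    intro η hη
    have hη0 : 0 < η := lt_of_lt_of_le (by positivity) hη
    rw [sum_cons_word]
    simp_rw [sum_cons_word, Fin.prod_univ_succ, Fin.cons_zero, Fin.cons_succ]
    have hij : ∀ i j, ∑ u : Fin m → Fin N, ∑ v : Fin m → Fin N,
        (p i * ∏ k, p (u k)) * (p j * ∏ k, p (v k)) *
        μ.real {t | ‖wpt T 0 t (m + 1) (Fin.cons i u) - wpt T 0 t (m + 1) (Fin.cons j v)‖ ≤ η}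
        ≤ (if i = j then M * η ^ σ * (p i * p i * r i ^ (-σ)) else 0)
          + p i * p j * (c * η ^ σ) := by
      intro i j
      have hnn : 0 ≤ p i * p j * (c * η ^ σ) :=
        mul_nonneg (mul_nonneg (hp0 _) (hp0 _)) (mul_nonneg hc0 (Real.rpow_nonneg hη0.le _))
      split_ifs with h
      · subst h
        simp_rw [hsame]
        have h2 := ih (η / r i) (by
          rw [le_div_iff₀ (hr i)]
          refine le_trans ?_ hη
          rw [pow_succ]
          gcongr
          linarith [hq i])
        refine le_trans ?_ (le_add_of_nonneg_right hnn)
        have h3 := mul_le_mul_of_nonneg_left h2 (mul_nonneg (hp0 i) (hp0 i))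
        rw [Finset.mul_sum] at h3
        simp_rw [Finset.mul_sum] at h3
        refine le_trans (le_of_eq ?_) (h3.trans (le_of_eq ?_))
        · refine Finset.sum_congr rfl fun u _ => Finset.sum_congr rfl fun v _ => by ring
        · rw [Real.div_rpow hη0.le (hr i).le, Real.rpow_neg (hr i).le]; ring
      · rw [zero_add]
        calc _ ≤ ∑ u : Fin m → Fin N, ∑ v : Fin m → Fin N,
              (p i * ∏ k, p (u k)) * (p j * ∏ k, p (v k)) * (c * η ^ σ) := by
              refine Finset.sum_le_sum fun u _ => Finset.sum_le_sum fun v _ => ?_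
              exact mul_le_mul_of_nonneg_left (htr m i j u v h η hη0)
                (mul_nonneg (mul_nonneg (hp0 _) (hP0 _ _)) (mul_nonneg (hp0 _) (hP0 _ _)))
          _ = (p i * ∑ u : Fin m → Fin N, ∏ k, p (u k)) *
              (p j * ∑ v : Fin m → Fin N, ∏ k, p (v k)) * (c * η ^ σ) := by
              simp_rw [← Finset.sum_mul, ← Finset.mul_sum, ← Finset.sum_mul, ← Finset.mul_sum]
          _ = _ := by rw [sum_word_weight hp]; ring
    calc _ = ∑ i, ∑ j, ∑ u : Fin m → Fin N, ∑ v : Fin m → Fin N,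
        (p i * ∏ k, p (u k)) * (p j * ∏ k, p (v k)) *
        μ.real {t | ‖wpt T 0 t (m + 1) (Fin.cons i u) - wpt T 0 t (m + 1) (Fin.cons j v)‖ ≤ η} :=
          Finset.sum_congr rfl fun i _ => Finset.sum_comm
      _ ≤ ∑ i, ∑ j, ((if i = j then M * η ^ σ * (p i * p i * r i ^ (-σ)) else 0)
          + p i * p j * (c * η ^ σ)) :=
          Finset.sum_le_sum fun i _ => Finset.sum_le_sum fun j _ => hij i j
      _ = M * η ^ σ * ρ + c * η ^ σ := by
          simp_rw [Finset.sum_add_distrib, Finset.sum_ite_eq, Finset.mem_univ, if_true,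
            ← Finset.sum_mul, ← Finset.mul_sum, ← Finset.sum_mul]
          rw [hp, one_mul, one_mul]
      _ = (M * ρ + c) * η ^ σ := by ring
      _ ≤ M * η ^ σ := by
          refine mul_le_mul_of_nonneg_right ?_ (Real.rpow_nonneg hη0.le _)
          have : c ≤ M * (1 - ρ) := (div_le_iff₀ h1ρ).1 (le_max_right _ _)
          linarith

/-- Discrete correlation sum at level `m`. -/
noncomputable def corr (T : Fin N → EuclideanSpace ℝ (Fin d) →ₗ[ℝ] EuclideanSpace ℝ (Fin d))
    (p : Fin N → ℝ) (K : ℝ) (m : ℕ) (t : Fin N → EuclideanSpace ℝ (Fin d)) : ℝ :=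
  ∑ u : Fin m → Fin N, ∑ v : Fin m → Fin N, (∏ k, p (u k)) * (∏ k, p (v k)) *
    {t | ‖wpt T 0 t m u - wpt T 0 t m v‖ ≤ K * (1 / 2) ^ m}.indicator (fun _ => (1:ℝ)) t

lemma corr_ae {T : Fin N → EuclideanSpace ℝ (Fin d) →ₗ[ℝ] EuclideanSpace ℝ (Fin d)}
    {r : Fin N → ℝ} (hr : ∀ i, 0 < r i) {q : ℝ} (hq : ∀ i, r i ≤ q) (hq2 : q < 1 / 2)
    (hT : ∀ i x y, dist (T i x) (T i y) = r i * dist x y)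
    {p : Fin N → ℝ} (hp0 : ∀ i, 0 ≤ p i) (hp : ∑ i, p i = 1) {σ τ : ℝ} (hσ0 : 0 < σ) (hσd : σ ≤ d)
    (hρ : ∑ i, p i * p i * r i ^ (-σ) < 1) (hτ : τ < σ) {R : ℝ} (hR : 1 ≤ R) :
    ∀ᵐ t ∂(volume.restrict (closedBall (0 : Fin N → EuclideanSpace ℝ (Fin d)) R)),
      ∀ᶠ m : ℕ in atTop, corr T p R m t < ((1 / 2 : ℝ) ^ τ) ^ m := by
  obtain ⟨M, hM, hE⟩ := energy_bound hr hq hq2 hT hp0 hp hσ0 hσd hρ (zero_le_one.trans hR)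
  set μ : Measure (Fin N → EuclideanSpace ℝ (Fin d)) := volume.restrict (closedBall 0 R) with hμ
  have : IsFiniteMeasure μ := ⟨by
    rw [hμ, Measure.restrict_apply_univ]; exact (isCompact_closedBall _ _).measure_lt_top⟩
  have hS : ∀ (m : ℕ) (u v : Fin m → Fin N), MeasurableSet
      {t | ‖wpt T 0 t m u - wpt T 0 t m v‖ ≤ R * (1 / 2) ^ m} := fun m u v =>
    (isClosed_le ((wpt_continuous _ _ _).sub (wpt_continuous _ _ _)).norm
      continuous_const).measurableSet
  have hint : ∀ (m : ℕ) (u v : Fin m → Fin N), Integrable (fun t =>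
      (∏ k, p (u k)) * (∏ k, p (v k)) *
      {t | ‖wpt T 0 t m u - wpt T 0 t m v‖ ≤ R * (1 / 2) ^ m}.indicator (fun _ => (1:ℝ)) t) μ :=
    fun m u v => ((integrable_const _).indicator (hS m u v)).const_mul _
  have hcint : ∀ m, Integrable (corr T p R m) μ := fun m =>
    integrable_finsetSum _ fun u _ => integrable_finsetSum _ fun v _ => hint m u v
  have hcI : ∀ m, ∫ t, corr T p R m t ∂μ ≤ M * R ^ σ * ((1 / 2 : ℝ) ^ σ) ^ m := by
    intro m
    have h1 := hE m (R * (1 / 2) ^ m) (le_mul_of_one_le_left (by positivity) hR)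
    have e : ∫ t, corr T p R m t ∂μ = ∑ u : Fin m → Fin N, ∑ v : Fin m → Fin N,
        (∏ k, p (u k)) * (∏ k, p (v k)) *
        μ.real {t | ‖wpt T 0 t m u - wpt T 0 t m v‖ ≤ R * (1 / 2) ^ m} := by
      simp only [corr]
      rw [integral_finsetSum _ fun u _ => integrable_finsetSum _ fun v _ => hint m u v]
      refine Finset.sum_congr rfl fun u _ => ?_
      rw [integral_finsetSum _ fun v _ => hint m u v]
      refine Finset.sum_congr rfl fun v _ => ?_
      rw [integral_const_mul, integral_indicator_const _ (hS m u v)]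
      simp
    rw [e]
    refine h1.trans_eq ?_
    rw [Real.mul_rpow (by linarith) (by positivity), ← Real.rpow_natCast, ← Real.rpow_mul (by norm_num),
      ← Real.rpow_natCast, ← Real.rpow_mul (by norm_num), mul_comm (m : ℝ)]
    ring
  have hnn : ∀ m t, 0 ≤ corr T p R m t := fun m t =>
    Finset.sum_nonneg fun u _ => Finset.sum_nonneg fun v _ =>
      mul_nonneg (mul_nonneg (Finset.prod_nonneg fun k _ => hp0 _)
        (Finset.prod_nonneg fun k _ => hp0 _)) (indicator_nonneg (fun _ _ => zero_le_one) _)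
  set a : ℝ := (1 / 2 : ℝ) ^ τ with ha
  set b : ℝ := (1 / 2 : ℝ) ^ σ with hb
  have ha0 : 0 < a := Real.rpow_pos_of_pos (by norm_num) _
  have hb0 : 0 < b := Real.rpow_pos_of_pos (by norm_num) _
  have hba : b / a < 1 := (div_lt_one ha0).2
    (Real.rpow_lt_rpow_of_exponent_gt (by norm_num) (by norm_num) hτ)
  have hmeas : ∀ m, μ {t | a ^ m ≤ corr T p R m t}
      ≤ ENNReal.ofReal (M * R ^ σ * (b / a) ^ m) := by
    intro m
    have h1 := mul_meas_ge_le_integral_of_nonneg (Eventually.of_forall (hnn m)) (hcint m) (a ^ m)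
    have h2 := h1.trans (hcI m)
    rw [← ofReal_measureReal]
    apply ENNReal.ofReal_le_ofReal
    rw [div_pow, ← mul_div_assoc, le_div_iff₀ (by positivity), mul_comm]
    exact h2
  have hsum : ∑' m, μ {t | a ^ m ≤ corr T p R m t} ≠ ⊤ := by
    refine ne_top_of_le_ne_top ?_ (ENNReal.tsum_le_tsum hmeas)
    exact ((summable_geometric_of_lt_one (by positivity) hba).mul_left _).tsum_ofReal_ne_top
  filter_upwards [ae_eventually_notMem hsum] with t ht
  filter_upwards [ht] with m hm
  simpa using hm

lemma corr_lower {T : Fin N → EuclideanSpace ℝ (Fin d) →ₗ[ℝ] EuclideanSpace ℝ (Fin d)}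
    {r : Fin N → ℝ} (hr : ∀ i, 0 < r i) (hr2 : ∀ i, r i < 1 / 2)
    (hT : ∀ i x y, dist (T i x) (T i y) = r i * dist x y)
    {p : Fin N → ℝ} (hp0 : ∀ i, 0 ≤ p i) (hp : ∑ i, p i = 1)
    {F : Set (EuclideanSpace ℝ (Fin d))} {t : Fin N → EuclideanSpace ℝ (Fin d)}
    (hF : ∀ i, ∀ x ∈ F, T i x + t i ∈ F) {y : EuclideanSpace ℝ (Fin d)} (hy : y ∈ F)
    {R : ℝ} (hyR : 1 + 2 * ‖y‖ ≤ R) (m n : ℕ) (U : Fin n → Set (EuclideanSpace ℝ (Fin d)))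
    (hU : ∀ i, ediam (U i) ≤ ENNReal.ofReal ((1 / 2) ^ m)) (hFU : F ⊆ ⋃ i, U i) :
    1 ≤ n * corr T p R m t := by
  classical
  have hc : ∀ u : Fin m → Fin N, ∃ k, wpt T y t m u ∈ U k := fun u =>
    mem_iUnion.1 (hFU (wpt_mem hF hy m u))
  choose c hc using hc
  have hP0 : ∀ (u : Fin m → Fin N), 0 ≤ ∏ k, p (u k) :=
    fun u => Finset.prod_nonneg fun k _ => hp0 _
  have hdist : ∀ u v, c u = c v → ‖wpt T 0 t m u - wpt T 0 t m v‖ ≤ R * (1 / 2) ^ m := by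
    intro u v huv
    have h1 : dist (wpt T y t m u) (wpt T y t m v) ≤ (1 / 2) ^ m := by
      have : edist (wpt T y t m u) (wpt T y t m v) ≤ ENNReal.ofReal ((1 / 2) ^ m) :=
        (edist_le_ediam_of_mem (hc u) (huv ▸ hc v)).trans (hU _)
      rw [edist_dist] at this
      exact (ENNReal.ofReal_le_ofReal_iff (by positivity)).1 this
    have h2 := wpt_dist hr hr2 hT 0 y t m u
    have h3 := wpt_dist hr hr2 hT y 0 t m v
    rw [dist_zero_left] at h2
    rw [dist_zero_right] at h3
    have h4 := dist_triangle4 (wpt T 0 t m u) (wpt T y t m u) (wpt T y t m v) (wpt T 0 t m v)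
    rw [← dist_eq_norm]
    have h5 := mul_le_mul_of_nonneg_right hyR (by positivity : (0:ℝ) ≤ (1 / 2) ^ m)
    linarith
  have h1 : ∑ k : Fin n, ∑ u : Fin m → Fin N, (if c u = k then ∏ k, p (u k) else 0) = 1 := by
    rw [Finset.sum_comm]
    simp [sum_word_weight hp]
  have h2 := sq_sum_le_card_mul_sum_sq (s := (Finset.univ : Finset (Fin n)))
    (f := fun k => ∑ u : Fin m → Fin N, (if c u = k then ∏ k, p (u k) else 0))
  rw [h1, one_pow, Finset.card_univ, Fintype.card_fin] at h2
  refine h2.trans (mul_le_mul_of_nonneg_left ?_ (by positivity))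
  simp_rw [sq, Finset.sum_mul_sum]
  rw [Finset.sum_comm, corr]
  refine Finset.sum_le_sum fun u _ => ?_
  rw [Finset.sum_comm]
  refine Finset.sum_le_sum fun v _ => ?_
  have e : ∑ k : Fin n, (if c u = k then ∏ k, p (u k) else 0) * (if c v = k then ∏ k, p (v k) else 0)
      = (∏ k, p (u k)) * (∏ k, p (v k)) * (if c u = c v then 1 else 0) := by
    simp_rw [ite_mul, zero_mul, Finset.sum_ite_eq, Finset.mem_univ, if_true]
    simp [eq_comm]
  rw [e]
  refine mul_le_mul_of_nonneg_left ?_ (mul_nonneg (hP0 u) (hP0 v))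
  split_ifs with h
  · rw [indicator_of_mem]; exact hdist u v h
  · exact indicator_nonneg (fun _ _ => zero_le_one) _

lemma ubDim_nonneg (hd : 0 < d) {F : Set (EuclideanSpace ℝ (Fin d))}
    (hF : Bornology.IsBounded F) (hne : F.Nonempty) : 0 ≤ ubDim F := by
  refine le_limsup_of_frequently_le (Eventually.frequently ?_) (bdd_above_ratio hd hF hne)
  filter_upwards [ev_small 1 one_pos] with δ hδ
  exact div_nonneg (Real.log_natCast_nonneg _) (by linarith [Real.log_neg hδ.1 hδ.2])

lemma le_ubDim_of_pow (hd : 0 < d) {F : Set (EuclideanSpace ℝ (Fin d))}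
    (hF : Bornology.IsBounded F) (hne : F.Nonempty) {τ : ℝ}
    (h : ∀ᶠ m : ℕ in atTop, 1 ≤ coverN F ((1 / 2) ^ m) * ((1 / 2 : ℝ) ^ τ) ^ m) :
    τ ≤ ubDim F := by
  refine le_limsup_of_frequently_le ?_ (bdd_above_ratio hd hF hne)
  have ht : Tendsto (fun m : ℕ => (1 / 2 : ℝ) ^ m) atTop (𝓝[>] 0) :=
    tendsto_nhdsWithin_iff.2 ⟨tendsto_pow_atTop_nhds_zero_of_lt_one (by norm_num) (by norm_num),
      Eventually.of_forall fun m => by simp⟩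
  refine ht.frequently (Eventually.frequently ?_)
  filter_upwards [h, eventually_gt_atTop 0] with m hm hm0
  have h0 := coverN_ne_zero hd hF hne (by positivity : (0:ℝ) < (1 / 2) ^ m)
  have hl : 0 < -Real.log ((1 / 2 : ℝ) ^ m) := by
    have := Real.log_neg (by positivity : (0:ℝ) < (1 / 2) ^ m)
      (pow_lt_one₀ (by norm_num) (by norm_num) hm0.ne')
    linarith
  rw [le_div_iff₀ hl]
  have := Real.log_le_log one_pos hm
  have h2 : (0:ℝ) < (1 / 2 : ℝ) ^ τ := Real.rpow_pos_of_pos (by norm_num) _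
  rw [Real.log_one, Real.log_mul (by positivity) (by positivity), Real.log_pow,
    Real.log_rpow (by norm_num)] at this
  rw [Real.log_pow]
  linarith

end Energy

lemma exists_simdim {N : ℕ} (hN : 0 < N) {r : Fin N → ℝ} (hr : ∀ i, 0 < r i)
    (hr2 : ∀ i, r i < 1 / 2) : ∃ s : ℝ, 0 ≤ s ∧ ∑ i, r i ^ s = 1 := by
  have hcont : Continuous fun s : ℝ => ∑ i, r i ^ s :=
    continuous_finsetSum _ fun i _ => Real.continuous_const_rpow (hr i).ne'
  have htend : Tendsto (fun s : ℝ => ∑ i, r i ^ s) atTop (𝓝 0) := by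
    have : Tendsto (fun s : ℝ => ∑ i, r i ^ s) atTop (𝓝 (∑ i : Fin N, (0:ℝ))) :=
      tendsto_finsetSum _ fun i _ =>
        tendsto_rpow_atTop_of_base_lt_one (r i) (by linarith [hr i]) (by linarith [hr2 i])
    simpa using this
  obtain ⟨b, hb, hb0⟩ := ((htend.eventually_lt_const one_pos).and (eventually_ge_atTop 0)).exists
  have h0 : (1:ℝ) ≤ ∑ i, r i ^ (0:ℝ) := by simp; exact_mod_cast hN
  obtain ⟨s, hs, hs1⟩ := intermediate_value_Icc' hb0 hcont.continuousOn ⟨hb.le, h0⟩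
  exact ⟨s, hs.1, hs1⟩

lemma generic_lower {d N : ℕ} (hd : 0 < d) (hN : 0 < N)
    {T : Fin N → EuclideanSpace ℝ (Fin d) →ₗ[ℝ] EuclideanSpace ℝ (Fin d)}
    {r : Fin N → ℝ} (hr : ∀ i, 0 < r i) (hr2 : ∀ i, r i < 1 / 2)
    (hT : ∀ i x y, dist (T i x) (T i y) = r i * dist x y) {s : ℝ} (hs : ∑ i, r i ^ s = 1) :
    ∀ᵐ t : Fin N → EuclideanSpace ℝ (Fin d) ∂volume,
      ∀ F : Set (EuclideanSpace ℝ (Fin d)), Bornology.IsBounded F → F.Nonempty →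
        F = ⋃ i, (fun x => T i x + t i) '' F → min s d ≤ ubDim F := by
  have : Nonempty (Fin N) := ⟨⟨0, hN⟩⟩
  obtain ⟨i0, hi0⟩ := Finite.exists_max r
  set p : Fin N → ℝ := fun i => r i ^ s with hp
  have hp0 : ∀ i, 0 ≤ p i := fun i => Real.rpow_nonneg (hr i).le _
  have main : ∀ᵐ t : Fin N → EuclideanSpace ℝ (Fin d) ∂volume, ∀ (n : ℕ) (τ : ℚ),
      0 < (τ : ℝ) → (τ : ℝ) < min s d → t ∈ closedBall 0 ((n : ℝ) + 1) →
      ∀ᶠ m : ℕ in atTop, corr T p ((n : ℝ) + 1) m t < ((1 / 2 : ℝ) ^ (τ : ℝ)) ^ m := by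
    rw [ae_all_iff]; intro n
    rw [ae_all_iff]; intro τ
    by_cases h0 : 0 < (τ : ℝ) ∧ (τ : ℝ) < min s d
    swap
    · exact Eventually.of_forall fun t h1 h2 => absurd ⟨h1, h2⟩ h0
    obtain ⟨σ, h1, h2⟩ := exists_between h0.2
    have hρ : ∑ i, p i * p i * r i ^ (-σ) < 1 := by
      rw [← hs]
      refine Finset.sum_lt_sum_of_nonempty Finset.univ_nonempty fun i _ => ?_
      have hsσ : 0 < s - σ := by linarith [h2.trans_le (min_le_left _ _)]
      have : p i * r i ^ (-σ) < 1 := by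
        rw [hp, ← Real.rpow_add (hr i), ← sub_eq_add_neg]
        exact Real.rpow_lt_one (hr i).le (by linarith [hr2 i]) hsσ
      rw [mul_assoc]
      exact mul_lt_of_lt_one_right (Real.rpow_pos_of_pos (hr i) _) this
    have := corr_ae hr hi0 (hr2 i0) hT hp0 hs (h0.1.trans h1) (h2.le.trans (min_le_right _ _)) hρ h1
      (R := (n : ℝ) + 1) (by linarith [(Nat.cast_nonneg n : (0:ℝ) ≤ n)])
    rw [ae_restrict_iff' measurableSet_closedBall] at this
    filter_upwards [this] with t ht _ _ using ht
  filter_upwards [main] with t ht F hFb hFne hF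
  by_contra! hcon
  have hnn := ubDim_nonneg hd hFb hFne
  obtain ⟨τ, h1, h2⟩ := exists_rat_btwn hcon
  obtain ⟨y, hy⟩ := hFne
  have hFi : ∀ i, ∀ x ∈ F, T i x + t i ∈ F := fun i x hx => by
    rw [hF]; exact mem_iUnion.2 ⟨i, x, hx, rfl⟩
  obtain ⟨n, hn⟩ := exists_nat_ge (max ‖t‖ (2 * ‖y‖))
  have hev := ht n τ (hnn.trans_lt h1) h2 (by
    rw [mem_closedBall_zero_iff]; linarith [(le_max_left _ _).trans hn])
  refine absurd (le_ubDim_of_pow hd hFb ⟨y, hy⟩ (τ := τ) ?_) (not_le.2 h1)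
  filter_upwards [hev] with m hm
  obtain ⟨U, hU, hFU⟩ := coverN_spec hd hFb (by positivity : (0:ℝ) < (1 / 2) ^ m)
  refine (corr_lower hr hr2 hT hp0 hs hFi hy (R := (n : ℝ) + 1)
    (by linarith [(le_max_right _ _).trans hn]) m _ U hU hFU).trans ?_
  exact mul_le_mul_of_nonneg_left hm.le (by positivity)

theorem upper_box_dim_inhomogeneous_generic
    (d N : ℕ) (hd : 0 < d) (hN : 0 < N)
    (T : Fin N → EuclideanSpace ℝ (Fin d) →ₗ[ℝ] EuclideanSpace ℝ (Fin d))
    (r : Fin N → ℝ) (hr : ∀ i, 0 < r i) (hr2 : ∀ i, r i < 1 / 2)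
    (hT : ∀ i x y, dist (T i x) (T i y) = r i * dist x y)
    (C : Set (EuclideanSpace ℝ (Fin d))) (hC : IsCompact C) (hCne : C.Nonempty) :
    ∀ᵐ t : Fin N → EuclideanSpace ℝ (Fin d) ∂volume,
      ∀ F0 FC : Set (EuclideanSpace ℝ (Fin d)),
        IsCompact F0 → F0.Nonempty → F0 = ⋃ i, (fun x => T i x + t i) '' F0 →
        IsCompact FC → FC.Nonempty → FC = (⋃ i, (fun x => T i x + t i) '' FC) ∪ C →
        ubDim FC = max (ubDim F0) (ubDim C) := by
  obtain ⟨s, hs0, hs⟩ := exists_simdim hN hr hr2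
  filter_upwards [generic_lower hd hN hr hr2 hT hs] with t ht F0 FC h0c h0ne h0 hFc hFne hF
  have hlow := ht F0 h0c.isBounded h0ne h0
  have hFi : ∀ i, ∀ x ∈ FC, T i x + t i ∈ FC := fun i x hx => by
    rw [hF]; exact Or.inl (mem_iUnion.2 ⟨i, x, hx, rfl⟩)
  have hCF : C ⊆ FC := by rw [hF]; exact subset_union_right
  apply le_antisymm
  · refine le_of_forall_gt_imp_ge_of_dense fun σ hσ => ?_
    have hσ0 := (le_max_left _ _).trans_lt hσ
    have hσC := (le_max_right _ _).trans_lt hσ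
    rcases le_total (d : ℝ) s with h | h
    · rw [min_eq_right h] at hlow
      obtain ⟨K, hK, hb⟩ := coverN_upper hd hFc.isBounded
      refine (ubDim_le hd hFc.isBounded hFne hK ?_).trans (hlow.trans hσ0.le)
      filter_upwards [ev_small 1 one_pos] with δ hδ using hb δ hδ.1 hδ.2.le
    · rw [min_eq_left h] at hlow
      have hsσ : s < σ := hlow.trans_lt hσ0
      refine ubDim_FC_le hd hr hr2 (f := fun i x => T i x + t i)
        (fun i x y => by rw [dist_add_right, hT]) hC.isBounded hCne hFc.isBounded hF
        (hs0.trans hsσ.le) ?_ hσC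
      rw [← hs]
      have : Nonempty (Fin N) := ⟨⟨0, hN⟩⟩
      exact Finset.sum_lt_sum_of_nonempty Finset.univ_nonempty fun i _ =>
        Real.rpow_lt_rpow_of_exponent_gt (hr i) (by linarith [hr2 i]) hsσ
  · refine max_le (ubDim_mono hd hFc.isBounded h0ne ?_) (ubDim_mono hd hFc.isBounded hCne hCF)
    exact attractor_subset hr hr2 hT h0c.isBounded h0 hFc.isClosed hFne hFi
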